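/- The function u(x,t) = 1 − (1 + exp(x/√6 − 5t/6))^{−2} satisfies the KPP (Fisher) reaction–diffusion equation ∂u/∂t(x,t) − ∂²u/∂x²(x,t) + u(x,t)(1 − u(x,t)) = 0 at every point (x,t) ∈ ℝ × ℝ, and it satisfies the initial condition u(x,0) = ψ(x) for every x ∈ ℝ. -/

import Mathlib

/-!
The solution is a travelling wave `u = 1 - v²` with `v = (1 + exp z)⁻¹` and phase
`z = x/√6 - 5t/6`. The logistic equation `dv/dz = v² - v` (`hasDerivAt_logistic`) makes every
derivative of `u` a polynomial in `v`: `u_t = -(5/3)(v² - v³)` and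
`u_xx = (1/6)(-4v² + 10v³ - 6v⁴)`. Since `u(1 - u) = v² - v⁴`, the equation becomes a polynomial
identity in `v`.
-/

/-- The logistic equation `v' = v² - v`, composed with a phase `g`. -/
lemma hasDerivAt_logistic {g : ℝ → ℝ} {c y : ℝ} (hg : HasDerivAt g c y) :
    HasDerivAt (fun s => (1 + Real.exp (g s))⁻¹)
      (c * ((1 + Real.exp (g y))⁻¹ ^ 2 - (1 + Real.exp (g y))⁻¹)) y := by
  have hne : 1 + Real.exp (g y) ≠ 0 := by positivity
  refine ((hg.exp.const_add 1).fun_inv hne).congr_deriv ?_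
  field_simp
  ring

lemma hasDerivAt_wave {g : ℝ → ℝ} {c y : ℝ} (hg : HasDerivAt g c y) :
    HasDerivAt (fun s => 1 - (1 + Real.exp (g s))⁻¹ ^ 2)
      (2 * c * ((1 + Real.exp (g y))⁻¹ ^ 2 - (1 + Real.exp (g y))⁻¹ ^ 3)) y := by
  refine (((hasDerivAt_logistic hg).fun_pow 2).const_sub 1).congr_deriv ?_
  push_cast
  ring

lemma hasDerivAt_wave_deriv {g : ℝ → ℝ} {c y : ℝ} (hg : HasDerivAt g c y) :
    HasDerivAt
      (fun s => 2 * c * ((1 + Real.exp (g s))⁻¹ ^ 2 - (1 + Real.exp (g s))⁻¹ ^ 3))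
      (c ^ 2 * (-4 * (1 + Real.exp (g y))⁻¹ ^ 2 + 10 * (1 + Real.exp (g y))⁻¹ ^ 3
        - 6 * (1 + Real.exp (g y))⁻¹ ^ 4)) y := by
  have h := hasDerivAt_logistic hg
  refine (((h.fun_pow 2).fun_sub (h.fun_pow 3)).const_mul (2 * c)).congr_deriv ?_
  push_cast
  ring

/-- The function `u(x,t) = 1 − (1 + exp(x/√6 − 5t/6))⁻²` satisfies the KPP (Fisher)
reaction–diffusion equation `∂u/∂t − ∂²u/∂x² + u(1 − u) = 0` at every point of `ℝ × ℝ`,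
with initial condition `u(x,0) = ψ(x) = 1 − (1 + exp(x/√6))⁻²`. -/
theorem kpp_exact_solution (u : ℝ → ℝ → ℝ) (ψ : ℝ → ℝ)
    (hu : ∀ x t : ℝ, u x t = 1 - (1 + Real.exp (x / Real.sqrt 6 - 5 * t / 6))⁻¹ ^ 2)
    (hψ : ∀ x : ℝ, ψ x = 1 - (1 + Real.exp (x / Real.sqrt 6))⁻¹ ^ 2) :
    (∀ x t : ℝ,
      deriv (fun s => u x s) t - deriv (deriv (fun y => u y t)) x
        + u x t * (1 - u x t) = 0) ∧
    (∀ x : ℝ, u x 0 = ψ x) := by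
  refine ⟨fun x t => ?_, fun x => by simp [hu, hψ]⟩
  have ht : HasDerivAt (fun s : ℝ => x / Real.sqrt 6 - 5 * s / 6) (-(5 / 6)) t := by
    refine ((((hasDerivAt_id' t).const_mul 5).div_const 6).const_sub (x / Real.sqrt 6)).congr_deriv ?_
    norm_num
  have hx (y : ℝ) :
      HasDerivAt (fun y : ℝ => y / Real.sqrt 6 - 5 * t / 6) (1 / Real.sqrt 6) y :=
    ((hasDerivAt_id y).div_const _).sub_const _
  have hc : (1 / Real.sqrt 6) ^ 2 = 1 / 6 := by
    rw [div_pow, Real.sq_sqrt (by norm_num), one_pow]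
  simp only [hu]
  rw [(hasDerivAt_wave ht).deriv, funext fun y => (hasDerivAt_wave (hx y)).deriv,
    (hasDerivAt_wave_deriv (hx x)).deriv, hc]
  ring
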